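/- Let w ∈ SU(2) ∗ F₂ be a word whose content ε(w) equals the commutator [x₁,x₂] = x₁x₂x₁⁻¹x₂⁻¹ of the two generators of F₂. Then there exist a, b ∈ SU(2) such that the evaluation homomorphism SU(2) ∗ F₂ → SU(2) (identity on SU(2), x₁ ↦ a, x₂ ↦ b) sends w to the identity; i.e., the equation w(a,b) = 1 can be solved in SU(2). -/

import Mathlib

/-- The special unitary group `SU(n)`: the subgroup of the unitary group
`U(n) = Matrix.unitaryGroup (Fin n) ℂ` consisting of matrices of determinant `1`. -/
def SU (n : ℕ) : Subgroup (Matrix.unitaryGroup (Fin n) ℂ) where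
  carrier := {A | (A : Matrix (Fin n) (Fin n) ℂ).det = 1}
  mul_mem' := by
    intro a b ha hb
    simp only [Set.mem_setOf_eq] at *
    simp [Matrix.UnitaryGroup.mul_val, Matrix.det_mul, ha, hb]
  one_mem' := by simp
  inv_mem' := by
    intro a ha
    simp only [Set.mem_setOf_eq] at *
    show ((a⁻¹ : Matrix.unitaryGroup (Fin n) ℂ) : Matrix (Fin n) (Fin n) ℂ).det = 1
    rw [Matrix.UnitaryGroup.inv_val, Matrix.star_eq_conjTranspose, Matrix.det_conjTranspose, ha]
    simp


/-! ### Part 1: mod 2 cochains on lists -/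
namespace CochainZ2

/-- mod 2 coboundary -/
def dl {V : Type*} : List V → (List V → ZMod 2) → ZMod 2
  | [], _ => 0
  | v :: l, ω => ω l + dl l (fun m => ω (v :: m))

/-- one prism step between two maps -/
def Q {U V : Type*} (φ ψ : U → V) : List U → (List V → ZMod 2) → ZMod 2
  | [], _ => 0
  | v :: l, ω => ω (φ v :: ψ v :: l.map ψ) + Q φ ψ l (fun m => ω (φ v :: m))

/-- full prism operator -/
def P {U V : Type*} (φ : ℕ → U → V) (N : ℕ) (ω : List V → ZMod 2) (l : List U) : ZMod 2 :=
  ∑ j ∈ Finset.range N, Q (φ j) (φ (j + 1)) l ω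

/-- multiply by a 0-cochain on the left -/
def sm {V : Type*} (s : V → ZMod 2) (ω : List V → ZMod 2) : List V → ZMod 2
  | [] => 0
  | v :: l => s v * ω (v :: l)

/-- cup product with coboundary of a 0-cochain -/
def D {V : Type*} (s : V → ZMod 2) (ω : List V → ZMod 2) : List V → ZMod 2
  | [] => 0
  | [_] => 0
  | v :: w :: l => (s v + s w) * ω (w :: l)

/-- the unit cochain -/
def one {V : Type*} : List V → ZMod 2
  | [] => 0
  | [_] => 1
  | _ :: _ :: _ => 0

variable {U V W : Type*}

theorem z2 (x : ZMod 2) : x + x = 0 := CharTwo.add_self_eq_zero x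

theorem dl_add (l : List V) (ω η : List V → ZMod 2) :
    dl l (fun m => ω m + η m) = dl l ω + dl l η := by
  induction l generalizing ω η with
  | nil => simp [dl]
  | cons v l ih => simp only [dl, ih]; ring

theorem dl_zero (l : List V) : dl l (fun _ => 0) = 0 := by
  induction l with
  | nil => simp [dl]
  | cons v l ih => simp only [dl, ih]; ring

theorem dl_smul (c : ZMod 2) (l : List V) (ω : List V → ZMod 2) :
    dl l (fun m => c * ω m) = c * dl l ω := by
  induction l generalizing ω with
  | nil => simp [dl]
  | cons v l ih => simp only [dl, ih]; ring

theorem dl_sum {ι : Type*} (t : Finset ι) (l : List V) (ω : ι → List V → ZMod 2) :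
    dl l (fun m => ∑ i ∈ t, ω i m) = ∑ i ∈ t, dl l (ω i) := by
  classical
  induction t using Finset.induction_on with
  | empty => simp [dl_zero]
  | insert a t ha ih => simp only [Finset.sum_insert ha]; rw [dl_add, ih]

theorem dl_map (f : U → V) (l : List U) (ω : List V → ZMod 2) :
    dl (l.map f) ω = dl l (fun m => ω (m.map f)) := by
  induction l generalizing ω with
  | nil => simp [dl]
  | cons v l ih => simp only [dl, List.map_cons, ih]

theorem dl_dl (l : List V) (ω : List V → ZMod 2) : dl l (fun m => dl m ω) = 0 := by
  induction l generalizing ω with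
  | nil => simp [dl]
  | cons v l ih =>
    simp only [dl]
    rw [dl_add, ih]
    linear_combination z2 (dl l ω)

theorem Q_add (φ ψ : U → V) (l : List U) (ω η : List V → ZMod 2) :
    Q φ ψ l (fun m => ω m + η m) = Q φ ψ l ω + Q φ ψ l η := by
  induction l generalizing ω η with
  | nil => simp [Q]
  | cons v l ih => simp only [Q, ih]; ring

theorem Q_map (φ ψ : U → V) (n : U → U) (n' : V → V) (h1 : ∀ u, φ (n u) = n' (φ u))
    (h2 : ∀ u, ψ (n u) = n' (ψ u)) (l : List U) (ω : List V → ZMod 2) :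
    Q φ ψ (l.map n) ω = Q φ ψ l (fun m => ω (m.map n')) := by
  induction l generalizing ω with
  | nil => simp [Q]
  | cons v l ih =>
    simp only [Q, List.map_cons, ih, h1, h2, List.map_map]
    congr 4
    exact List.map_congr_left (fun u _ => h2 u)

theorem Q_dl (φ ψ : U → V) (l : List U) (ω : List V → ZMod 2) :
    Q φ ψ l (fun m => dl m ω) =
      dl l (fun m => Q φ ψ m ω) + ω (l.map φ) + ω (l.map ψ) := by
  induction l generalizing ω with
  | nil => simp [Q, dl]; exact (z2 _).symm
  | cons v l ih =>
    simp only [Q, dl, List.map_cons]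
    rw [Q_add, ih, dl_add, dl_map]
    linear_combination z2 (ω (φ v :: List.map ψ l))

theorem Q_zero (φ ψ : U → V) (l : List U) (ω : List V → ZMod 2)
    (h : ∀ m : List V, (∀ v ∈ m, ∃ u ∈ l, v = φ u ∨ v = ψ u) → ω m = 0) : Q φ ψ l ω = 0 := by
  induction l generalizing ω with
  | nil => simp [Q]
  | cons v l ih =>
    simp only [Q]
    rw [ih, h, add_zero]
    · intro x hx
      simp only [List.mem_cons, List.mem_map] at hx ⊢
      rcases hx with rfl | rfl | ⟨a, ha, rfl⟩
      · exact ⟨v, Or.inl rfl, Or.inl rfl⟩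
      · exact ⟨v, Or.inl rfl, Or.inr rfl⟩
      · exact ⟨a, Or.inr ha, Or.inr rfl⟩
    · intro m hm
      apply h
      intro x hx
      simp only [List.mem_cons] at hx ⊢
      rcases hx with rfl | hx
      · exact ⟨v, Or.inl rfl, Or.inl rfl⟩
      · obtain ⟨u, hu, h'⟩ := hm x hx
        exact ⟨u, Or.inr hu, h'⟩

theorem P_nil (φ : ℕ → U → V) (N : ℕ) (ω : List V → ZMod 2) : P φ N ω [] = 0 := by
  simp [P, Q]

theorem P_add (φ : ℕ → U → V) (N : ℕ) (l : List U) (ω η : List V → ZMod 2) :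
    P φ N (fun m => ω m + η m) l = P φ N ω l + P φ N η l := by
  simp only [P, Q_add, Finset.sum_add_distrib]

theorem P_map (φ : ℕ → U → V) (N : ℕ) (n : U → U) (n' : V → V)
    (h1 : ∀ j u, φ j (n u) = n' (φ j u)) (l : List U) (ω : List V → ZMod 2) :
    P φ N ω (l.map n) = P φ N (fun m => ω (m.map n')) l := by
  simp only [P]
  refine Finset.sum_congr rfl fun j _ => Q_map _ _ _ _ (h1 j) (h1 (j+1)) _ _

theorem P_dl (φ : ℕ → U → V) (N : ℕ) (l : List U) (ω : List V → ZMod 2) :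
    P φ N (fun m => dl m ω) l =
      dl l (P φ N ω) + ω (l.map (φ 0)) + ω (l.map (φ N)) := by
  have : dl l (P φ N ω) = ∑ j ∈ Finset.range N, dl l (fun m => Q (φ j) (φ (j + 1)) m ω) := by
    rw [← dl_sum]; rfl
  rw [this]
  simp only [P, Q_dl]
  induction N with
  | zero => simp; exact (z2 _).symm
  | succ N ih =>
    rw [Finset.sum_range_succ, Finset.sum_range_succ, ih]
    · linear_combination z2 (ω (l.map (φ N)))
    · rw [← dl_sum]; rfl

theorem P_zero (φ : ℕ → U → V) (N : ℕ) (l : List U) (ω : List V → ZMod 2)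
    (h : ∀ j < N, ∀ m : List V, (∀ v ∈ m, ∃ u ∈ l, v = φ j u ∨ v = φ (j + 1) u) → ω m = 0) :
    P φ N ω l = 0 :=
  Finset.sum_eq_zero fun j hj => Q_zero _ _ _ _ (h j (Finset.mem_range.1 hj))

theorem sm_dl (s : V → ZMod 2) (ω : List V → ZMod 2) (hω : ∀ l, dl l ω = 0) (l : List V) :
    dl l (sm s ω) = D s ω l := by
  match l with
  | [] => simp [dl, D]
  | [v] => simp [dl, D, sm]
  | v :: w :: l =>
    have h := hω (v :: w :: l)
    have e : dl (v :: w :: l) (sm s ω) =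
      s w * ω (w :: l) + dl (w :: l) (fun m => s v * ω (v :: m)) := rfl
    have e' : dl (v :: w :: l) ω = ω (w :: l) + dl (w :: l) (fun m => ω (v :: m)) := rfl
    rw [e, dl_smul, D]
    rw [e'] at h
    linear_combination s v * h - z2 (s v * ω (w :: l))

theorem D_closed (s : V → ZMod 2) (ω : List V → ZMod 2) (hω : ∀ l, dl l ω = 0) (l : List V) :
    dl l (D s ω) = 0 := by
  have : D s ω = fun l => dl l (sm s ω) := by funext l; rw [sm_dl s ω hω]
  rw [this, dl_dl]

theorem one_closed (l : List V) : dl l one = 0 := by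
  match l with
  | [] => rfl
  | [v] => rfl
  | [v, w] => show one [w] + (one [v] + 0) = (0 : ZMod 2); simp [one]; exact z2 1
  | v :: w :: x :: l =>
    show one (w :: x :: l) + (one (v :: x :: l) + (one (v :: w :: l) + _)) = (0 : ZMod 2)
    have : dl l (fun m => one (v :: w :: x :: m)) = 0 := by
      simp only [one]; exact dl_zero l
    simp only [one]
    rw [dl_zero]; simp

/-- invariance -/
def Inv (f g : U → V) (ω : List V → ZMod 2) : Prop := ∀ l : List U, ω (l.map f) = ω (l.map g)

theorem Inv_one (f g : U → V) : Inv f g one := by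
  intro l
  match l with
  | [] => rfl
  | [_] => rfl
  | _ :: _ :: _ => rfl

theorem Inv_D {f g : U → V} {s : V → ZMod 2} {c : ZMod 2} (hs : ∀ u, s (f u) = s (g u) + c)
    {ω : List V → ZMod 2} (h : Inv f g ω) : Inv f g (D s ω) := by
  intro l
  match l with
  | [] => rfl
  | [_] => rfl
  | v :: w :: l =>
    have := h (w :: l)
    simp only [List.map_cons] at this
    simp only [List.map_cons, D, hs, this]
    linear_combination z2 c * ω (g w :: l.map g)

theorem sm_shift {f g : U → V} {s : V → ZMod 2} {c : ZMod 2} (hs : ∀ u, s (f u) = s (g u) + c)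
    {ω : List V → ZMod 2} (h : Inv f g ω) (h0 : ω [] = 0) (l : List U) :
    sm s ω (l.map g) + sm s ω (l.map f) = c * ω (l.map g) := by
  match l with
  | [] => simp [sm, h0]
  | v :: l =>
    have := h (v :: l)
    simp only [List.map_cons] at this
    simp only [List.map_cons, sm, hs, this]
    linear_combination z2 (s (g v) * ω (g v :: l.map g))

theorem Q_smul (c : ZMod 2) (φ ψ : U → V) (l : List U) (ω : List V → ZMod 2) :
    Q φ ψ l (fun m => c * ω m) = c * Q φ ψ l ω := by
  induction l generalizing ω with
  | nil => simp [Q]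
  | cons v l ih => simp only [Q, ih]; ring

theorem P_smul (c : ZMod 2) (φ : ℕ → U → V) (N : ℕ) (l : List U) (ω : List V → ZMod 2) :
    P φ N (fun m => c * ω m) l = c * P φ N ω l := by
  simp only [P, Q_smul, Finset.mul_sum]

/-- prism or restriction to the starting face -/
def op (φ : ℕ → U → V) (N : ℕ) : Bool → (List V → ZMod 2) → List U → ZMod 2
  | true => P φ N
  | false => fun ω l => ω (l.map (φ 0))

theorem op_add (φ : ℕ → U → V) (N : ℕ) (b : Bool) (ω η : List V → ZMod 2) :
    op φ N b (fun m => ω m + η m) = fun l => op φ N b ω l + op φ N b η l := by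
  funext l
  cases b
  · rfl
  · exact P_add _ _ _ _ _

theorem op_smul (φ : ℕ → U → V) (N : ℕ) (b : Bool) (c : ZMod 2) (ω : List V → ZMod 2) :
    op φ N b (fun m => c * ω m) = fun l => c * op φ N b ω l := by
  funext l
  cases b
  · rfl
  · exact P_smul _ _ _ _ _

theorem op_nil (φ : ℕ → U → V) (N : ℕ) (b : Bool) (ω : List V → ZMod 2) (h : ω [] = 0) :
    op φ N b ω [] = 0 := by
  cases b
  · exact h
  · exact P_nil _ _ _

theorem op_map (φ : ℕ → U → V) (N : ℕ) (b : Bool) (n : U → U) (n' : V → V)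
    (h1 : ∀ j u, φ j (n u) = n' (φ j u)) (l : List U) (ω : List V → ZMod 2) :
    op φ N b ω (l.map n) = op φ N b (fun m => ω (m.map n')) l := by
  cases b
  · simp only [op, List.map_map]
    congr 1
    exact List.map_congr_left (fun u _ => h1 0 u)
  · exact P_map _ _ _ _ h1 _ _

/-- indicator of a boolean -/
def ind : Bool → ZMod 2
  | true => 1
  | false => 0

theorem op_dl (φ : ℕ → U → V) (N : ℕ) (b : Bool) (ω : List V → ZMod 2) :
    op φ N b (fun m => dl m ω) =
      fun l => dl l (op φ N b ω) + ind b * (ω (l.map (φ 0)) + ω (l.map (φ N))) := by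
  funext l
  cases b
  · simp [op, ind, dl_map]
  · simp only [op, ind, P_dl]; ring

section main
variable {S S' : Type*} (nA : S → S) (nB : S' → S') (A : ℕ → ℕ → S) (B : ℕ → S') (N : ℕ)

/-- evaluation on cells of the projective plane -/
def d : ℕ → (List S → ZMod 2) → ZMod 2
  | 0 => fun ξ => ξ [A 0 0]
  | 1 => fun ξ => ∑ i ∈ Finset.range N, ξ [A i 0, A (i + 1) 0]
  | _ => fun ξ => P (fun i (_ : Unit) => i) (N + N) (P (fun j i => A i j) N ξ) [()]

/-- one dimension lower -/
def dpre : ℕ → (List S → ZMod 2) → ZMod 2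
  | 0 => fun _ => 0
  | 1 => d A N 0
  | _ => d A N 1

theorem d_add (x : ℕ) (ω η : List S → ZMod 2) :
    d A N x (fun l => ω l + η l) = d A N x ω + d A N x η := by
  match x with
  | 0 => rfl
  | 1 => simp only [d, Finset.sum_add_distrib]
  | x + 2 =>
    simp only [d]
    rw [← P_add]
    congr 1
    funext l
    exact P_add _ _ _ _ _

theorem d_smul (x : ℕ) (c : ZMod 2) (ω : List S → ZMod 2) :
    d A N x (fun l => c * ω l) = c * d A N x ω := by
  match x with
  | 0 => rfl
  | 1 => simp only [d, Finset.mul_sum]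
  | x + 2 =>
    simp only [d]
    rw [← P_smul]
    congr 1
    funext l
    exact P_smul _ _ _ _ _

theorem d_dl (hA0 : ∀ i, A (i + N) 0 = nA (A i 0)) (hper : ∀ j, A (N + N) j = A 0 j)
    (hAN : ∀ i, A i N = A 0 N) (x : ℕ) (ξ : List S → ZMod 2) (h0 : ξ [] = 0) :
    d A N x (fun l => dl l ξ) = dpre A N x (fun l => ξ l + ξ (l.map nA)) := by
  match x with
  | 0 => simp [d, dpre, dl, h0]
  | 1 =>
    have := hA0 0
    rw [zero_add] at this
    simp only [d, dpre, dl, List.map_cons, List.map_nil, ← this]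
    have key : ∀ n, ∑ i ∈ Finset.range n, (ξ [A (i + 1) 0] + (ξ [A i 0] + 0)) =
        ξ [A 0 0] + ξ [A n 0] := by
      intro n
      induction n with
      | zero => simp; exact (z2 _).symm
      | succ n ih => rw [Finset.sum_range_succ, ih]; linear_combination z2 (ξ [A n 0])
    exact key N
  | x + 2 =>
    simp only [d, dpre]
    have e : P (fun j i => A i j) N (fun l => dl l ξ) = fun l =>
        dl l (P (fun j i => A i j) N ξ) + (ξ (l.map (fun i => A i 0)) + ξ (l.map (fun i => A i N))) := by
      funext l; rw [P_dl]; ring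
    rw [e, P_add, P_dl]
    have e1 : dl [()] (P (fun i (_ : Unit) => i) (N + N) (P (fun j i => A i j) N ξ)) = 0 := by
      simp [dl, P_nil]
    have e2 : P (fun j i => A i j) N ξ [N + N] = P (fun j i => A i j) N ξ [0] := by
      simp only [P, Q, hper]
    have e3 : P (fun i (_ : Unit) => i) (N + N) (fun l => ξ (l.map (fun i => A i 0)) +
        ξ (l.map (fun i => A i N))) [()] =
        ∑ i ∈ Finset.range (N + N), (ξ [A i 0, A (i + 1) 0] + ξ [A 0 N, A 0 N]) := by
      simp only [P, Q, List.map_cons, List.map_nil, add_zero]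
      refine Finset.sum_congr rfl fun i _ => ?_
      rw [hAN i, hAN (i + 1)]
    rw [e1, e3]
    simp only [List.map_cons, List.map_nil]
    rw [e2, Finset.sum_add_distrib, Finset.sum_range_add, Finset.sum_const, Finset.card_range,
      Finset.sum_add_distrib]
    have e4 : ∀ i, A (N + i + 1) 0 = nA (A (i + 1) 0) := fun i => by rw [← hA0]; congr 1; ring
    have e5 : ∀ i, A (N + i) 0 = nA (A i 0) := fun i => by rw [← hA0]; congr 1; ring
    simp only [e4, e5, add_nsmul]
    linear_combination z2 (P (fun j i => A i j) N ξ [0]) + z2 (N • ξ [A 0 N, A 0 N])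

/-- the slab maps -/
def tau (t : ℕ) (p : S × S') : (S × S') × ℕ := (p, t)
/-- the slab maps -/
def bet (k : ℕ) (p : S) : S × S' := (p, B k)

/-- the main functional -/
def I (x : ℕ) (y z : Bool) (ω : List ((S × S') × ℕ) → ZMod 2) : ZMod 2 :=
  d A N x (op (bet B) N y (op tau N z ω))

/-- lower functional -/
def Ipre (x : ℕ) (y z : Bool) (ω : List ((S × S') × ℕ) → ZMod 2) : ZMod 2 :=
  dpre A N x (op (bet B) N y (op tau N z ω))

theorem peel (hA0 : ∀ i, A (i + N) 0 = nA (A i 0)) (hper : ∀ j, A (N + N) j = A 0 j)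
    (hAN : ∀ i, A i N = A 0 N) (hB : B N = nB (B 0)) (x : ℕ) (y z : Bool)
    (s : (S × S') × ℕ → ZMod 2) (c : ZMod 2)
    (sA : ∀ a b t, s ((nA a, b), t) = s ((a, b), t) + 1)
    (sB : ∀ a b t, s ((a, nB b), t) = s ((a, b), t) + 1)
    (sT : ∀ a b, s ((a, b), N) = s ((a, b), 0) + c)
    (ω : List ((S × S') × ℕ) → ZMod 2) (h0 : ω [] = 0) (hω : ∀ l, dl l ω = 0)
    (wA : Inv (fun v => ((nA v.1.1, v.1.2), v.2)) id ω)
    (wB : Inv (fun v => ((v.1.1, nB v.1.2), v.2)) id ω)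
    (wT : Inv (tau N) (tau 0) ω) :
    I A B N x y z (D s ω) = Ipre A B N x y z ω + ind y * I A B N x false z ω
      + ind z * c * I A B N x y false ω := by
  have hD : D s ω = fun l => dl l (sm s ω) := by funext l; rw [sm_dl s ω hω]
  have r1 := sm_shift (c := c) (s := s) (f := tau N) (g := tau 0) (fun u => sT u.1 u.2) wT h0
  have r2 := sm_shift (s := s) (f := fun v : (S × S') × ℕ => ((v.1.1, nB v.1.2), v.2)) (g := id)
    (fun u => sB u.1.1 u.1.2 u.2) wB h0
  have r3 := sm_shift (s := s) (f := fun v : (S × S') × ℕ => ((nA v.1.1, v.1.2), v.2)) (g := id)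
    (fun u => sA u.1.1 u.1.2 u.2) wA h0
  simp only [List.map_id, one_mul] at r2 r3
  have q1 : (fun l => ind z * (sm s ω (l.map (tau 0)) + sm s ω (l.map (tau N)))) =
      fun l => ind z * c * op tau N false ω l := by
    funext l
    rw [r1]; simp only [op]; ring
  have q2 : (fun l => ind y * (op tau N z (sm s ω) (l.map (bet B 0))
      + op tau N z (sm s ω) (l.map (bet B N)))) =
      fun l => ind y * op (bet B) N false (op tau N z ω) l := by
    funext l
    have : l.map (bet (S := S) B N) = (l.map (bet B 0)).map (fun p => (p.1, nB p.2)) := by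
      rw [List.map_map]
      exact List.map_congr_left (fun u _ => by simp [bet, hB])
    rw [this, op_map (n := fun p : S × S' => (p.1, nB p.2))
      (n' := fun v : (S × S') × ℕ => ((v.1.1, nB v.1.2), v.2)) (h1 := fun _ _ => rfl)]
    have := congrFun (op_add tau N z (sm s ω) (fun m => sm s ω (m.map (fun v : (S × S') × ℕ => ((v.1.1, nB v.1.2), v.2))))) (l.map (bet B 0))
    rw [← this]
    simp only [r2]
    rfl
  have q3 : (fun l => op (bet B) N y (op tau N z (sm s ω)) l +
      op (bet B) N y (op tau N z (sm s ω)) (l.map nA)) = op (bet B) N y (op tau N z ω) := by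
    funext l
    rw [op_map (n := nA) (n' := fun p : S × S' => (nA p.1, p.2)) (h1 := fun _ _ => rfl)]
    have e1 : (fun m => op (tau (S := S) (S' := S')) N z (sm s ω) (m.map (fun p : S × S' => (nA p.1, p.2)))) =
       op tau N z (fun m => sm s ω (m.map (fun v : (S × S') × ℕ => ((nA v.1.1, v.1.2), v.2)))) := by
      funext m
      exact op_map _ _ _ _ (fun v : (S × S') × ℕ => ((nA v.1.1, v.1.2), v.2)) (fun _ _ => rfl) _ _
    rw [e1]
    have := congrFun (op_add (bet B) N y (op tau N z (sm s ω)) (op tau N z (fun m => sm s ω (m.map (fun v : (S × S') × ℕ => ((nA v.1.1, v.1.2), v.2)))))) l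
    rw [← this, ← op_add]
    simp only [r3]
  have h0' : op (bet B) N y (op tau N z (sm s ω)) ([] : List S) = 0 :=
    op_nil _ _ _ _ (op_nil _ _ _ _ rfl)
  simp only [I, Ipre]
  rw [hD, op_dl, op_add, q1, d_add, op_dl, d_add, q2, op_smul, d_smul, d_smul,
    d_dl nA A N hA0 hper hAN _ _ h0', q3]

theorem total (hA0 : ∀ i, A (i + N) 0 = nA (A i 0)) (hper : ∀ j, A (N + N) j = A 0 j)
    (hAN : ∀ i, A i N = A 0 N) (hB : B N = nB (B 0))
    (s : Fin 4 → (S × S') × ℕ → ZMod 2)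
    (sA : ∀ m a b t, s m ((nA a, b), t) = s m ((a, b), t) + 1)
    (sB : ∀ m a b t, s m ((a, nB b), t) = s m ((a, b), t) + 1)
    (sT : ∀ m a b, s m ((a, b), N) = s m ((a, b), 0) + if m = 0 then 1 else 0) :
    I A B N 2 true true (D (s 0) (D (s 1) (D (s 2) (D (s 3) one)))) = 1 := by
  have P' := fun m => peel nA nB A B N hA0 hper hAN hB (s := s m) (c := if m = 0 then 1 else 0)
    (sA := sA m) (sB := sB m) (sT := sT m)
  have kA : ∀ m ω, Inv (fun v : (S × S') × ℕ => ((nA v.1.1, v.1.2), v.2)) id ω →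
    Inv (fun v : (S × S') × ℕ => ((nA v.1.1, v.1.2), v.2)) id (D (s m) ω) := fun m ω =>
      Inv_D (c := 1) (fun u : (S × S') × ℕ => sA m u.1.1 u.1.2 u.2)
  have kB : ∀ m ω, Inv (fun v : (S × S') × ℕ => ((v.1.1, nB v.1.2), v.2)) id ω →
    Inv (fun v : (S × S') × ℕ => ((v.1.1, nB v.1.2), v.2)) id (D (s m) ω) := fun m ω =>
      Inv_D (c := 1) (fun u : (S × S') × ℕ => sB m u.1.1 u.1.2 u.2)
  have kT : ∀ m ω, Inv (tau N) (tau 0) ω → Inv (tau N) (tau 0) (D (s m) ω) := fun m ω =>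
      Inv_D (fun u : S × S' => sT m u.1 u.2)
  have p3 := fun x y z => P' 3 x y z one rfl one_closed (Inv_one _ _) (Inv_one _ _) (Inv_one _ _)
  have p2 := fun x y z => P' 2 x y z (D (s 3) one) rfl (D_closed _ _ one_closed)
    (kA _ _ (Inv_one _ _)) (kB _ _ (Inv_one _ _)) (kT _ _ (Inv_one _ _))
  have p1 := fun x y z => P' 1 x y z (D (s 2) (D (s 3) one)) rfl
    (D_closed _ _ (D_closed _ _ one_closed))
    (kA _ _ (kA _ _ (Inv_one _ _))) (kB _ _ (kB _ _ (Inv_one _ _))) (kT _ _ (kT _ _ (Inv_one _ _)))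
  have p0 := fun x y z => P' 0 x y z (D (s 1) (D (s 2) (D (s 3) one))) rfl
    (D_closed _ _ (D_closed _ _ (D_closed _ _ one_closed)))
    (kA _ _ (kA _ _ (kA _ _ (Inv_one _ _)))) (kB _ _ (kB _ _ (kB _ _ (Inv_one _ _))))
    (kT _ _ (kT _ _ (kT _ _ (Inv_one _ _))))
  have i2 : ∀ y z ω, Ipre A B N 2 y z ω = I A B N 1 y z ω := fun _ _ _ => rfl
  have i1 : ∀ y z ω, Ipre A B N 1 y z ω = I A B N 0 y z ω := fun _ _ _ => rfl
  have i0 : ∀ y z ω, Ipre A B N 0 y z ω = 0 := fun _ _ _ => rfl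
  have f1 : I A B N 0 false false one = 1 := rfl
  have g1 : ((1 : Fin 4) = 0) = False := by simp
  have g2 : ((2 : Fin 4) = 0) = False := by simp
  have g3 : ((3 : Fin 4) = 0) = False := by simp
  simp only [p0, p1, p2, p3, i2, i1, i0, f1, ind, g1, g2, g3, if_true, if_false, one_mul, zero_mul, mul_zero, mul_one,
    add_zero, zero_add]
  rfl

theorem D_ne {s : V → ZMod 2} {ω : List V → ZMod 2} {l : List V} (h : D s ω l ≠ 0) :
    (∃ v ∈ l, ∃ w ∈ l, s v ≠ s w) ∧ ∃ l' , (∀ v ∈ l', v ∈ l) ∧ ω l' ≠ 0 := by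
  match l with
  | [] => exact absurd rfl h
  | [_] => exact absurd rfl h
  | v :: w :: l =>
    simp only [D] at h
    refine ⟨⟨v, by simp, w, by simp, ?_⟩, w :: l, fun x hx => List.mem_cons_of_mem _ hx,
      right_ne_zero_of_mul h⟩
    intro e
    rw [e, z2, zero_mul] at h
    exact h rfl

theorem exists_cell (hA0 : ∀ i, A (i + N) 0 = nA (A i 0)) (hper : ∀ j, A (N + N) j = A 0 j)
    (hAN : ∀ i, A i N = A 0 N) (hB : B N = nB (B 0))
    (s : Fin 4 → (S × S') × ℕ → ZMod 2)
    (sA : ∀ m a b t, s m ((nA a, b), t) = s m ((a, b), t) + 1)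
    (sB : ∀ m a b t, s m ((a, nB b), t) = s m ((a, b), t) + 1)
    (sT : ∀ m a b, s m ((a, b), N) = s m ((a, b), 0) + if m = 0 then 1 else 0) :
    ∃ i < N + N, ∃ j < N, ∃ k < N, ∃ t < N, ∃ L : List ((S × S') × ℕ),
      (∀ v ∈ L, ∃ i' j' k' t', (i' = i ∨ i' = i + 1) ∧ (j' = j ∨ j' = j + 1) ∧
        (k' = k ∨ k' = k + 1) ∧ (t' = t ∨ t' = t + 1) ∧ v = ((A i' j', B k'), t')) ∧
      ∀ m, ∃ v ∈ L, ∃ w ∈ L, s m v ≠ s m w := by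
  by_contra hcon
  have h1 := total nA nB A B N hA0 hper hAN hB s sA sB sT
  apply one_ne_zero (α := ZMod 2)
  rw [← h1]
  simp only [I, d, op]
  refine P_zero _ _ _ _ fun i hi m1 hm1 => P_zero _ _ _ _ fun j hj m2 hm2 =>
    P_zero _ _ _ _ fun k hk m3 hm3 => P_zero _ _ _ _ fun t ht L hL => ?_
  by_contra hne
  apply hcon
  refine ⟨i, hi, j, hj, k, hk, t, ht, L, ?_, ?_⟩
  · intro v hv
    obtain ⟨u3, hu3, e4⟩ := hL v hv
    obtain ⟨u2, hu2, e3⟩ := hm3 u3 hu3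
    obtain ⟨u1, hu1, e2⟩ := hm2 u2 hu2
    obtain ⟨u0, hu0, e1⟩ := hm1 u1 hu1
    obtain ⟨k', hk', e3⟩ : ∃ k', (k' = k ∨ k' = k + 1) ∧ u3 = (u2, B k') := by
      rcases e3 with e | e
      · exact ⟨k, Or.inl rfl, e⟩
      · exact ⟨k + 1, Or.inr rfl, e⟩
    obtain ⟨t', ht', e4⟩ : ∃ t', (t' = t ∨ t' = t + 1) ∧ v = (u3, t') := by
      rcases e4 with e | e
      · exact ⟨t, Or.inl rfl, e⟩
      · exact ⟨t + 1, Or.inr rfl, e⟩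
    obtain ⟨j', hj', e2⟩ : ∃ j', (j' = j ∨ j' = j + 1) ∧ u2 = A u1 j' := by
      rcases e2 with e | e
      · exact ⟨j, Or.inl rfl, e⟩
      · exact ⟨j + 1, Or.inr rfl, e⟩
    exact ⟨u1, j', k', t', e1, hj', hk', ht', by rw [e4, e3, e2]⟩
  · obtain ⟨a0, L1, hL1, b0⟩ := D_ne hne
    obtain ⟨⟨v1, hv1, w1, hw1, a1⟩, L2, hL2, b1⟩ := D_ne b0
    obtain ⟨⟨v2, hv2, w2, hw2, a2⟩, L3, hL3, b2⟩ := D_ne b1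
    obtain ⟨⟨v3, hv3, w3, hw3, a3⟩, L4, hL4, b3⟩ := D_ne b2
    intro m
    fin_cases m
    · exact a0
    · exact ⟨v1, hL1 _ hv1, w1, hL1 _ hw1, a1⟩
    · exact ⟨v2, hL1 _ (hL2 _ hv2), w2, hL1 _ (hL2 _ hw2), a2⟩
    · exact ⟨v3, hL1 _ (hL2 _ (hL3 _ hv3)), w3, hL1 _ (hL2 _ (hL3 _ hw3)), a3⟩

end main
end CochainZ2

/-! ### Part 2: unit quaternions -/
namespace UnitQuat
open Quaternion

/-- unit quaternions -/
abbrev Qs := Metric.sphere (0 : ℍ[ℝ]) 1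

/-- quaternion from coordinates -/
def qt (x y z w : ℝ) : ℍ[ℝ] := ⟨x, y, z, w⟩

theorem neg_one_mul_Qs (a : Qs) : (-1 : Qs) * a = -a :=
  Subtype.ext (by show (-(1 : ℍ[ℝ])) * a = -(a : ℍ[ℝ]); rw [neg_one_mul])

theorem mul_neg_one_Qs (a : Qs) : a * (-1 : Qs) = -a :=
  Subtype.ext (by show (a : ℍ[ℝ]) * (-(1 : ℍ[ℝ])) = -(a : ℍ[ℝ]); rw [mul_neg_one])

theorem qt_mem {x y z w : ℝ} (h : x ^ 2 + y ^ 2 + z ^ 2 + w ^ 2 = 1) :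
    qt x y z w ∈ Metric.sphere (0 : ℍ[ℝ]) 1 := by
  have h2 : ‖qt x y z w‖ ^ 2 = 1 := by
    rw [sq, ← Quaternion.normSq_eq_norm_mul_self, Quaternion.normSq_def']
    exact h
  have h3 : ‖qt x y z w‖ = 1 :=
    (pow_eq_one_iff_of_nonneg (norm_nonneg _) two_ne_zero).1 h2
  simpa using h3

theorem normSq_one (q : Qs) : (q : ℍ[ℝ]).re ^ 2 + (q : ℍ[ℝ]).imI ^ 2 + (q : ℍ[ℝ]).imJ ^ 2
    + (q : ℍ[ℝ]).imK ^ 2 = 1 := by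
  rw [← Quaternion.normSq_def', Quaternion.normSq_eq_norm_mul_self]
  have : ‖(q : ℍ[ℝ])‖ = 1 := by simp
  rw [this]; norm_num

/-- the matrix of a quaternion -/
noncomputable def mat (q : ℍ[ℝ]) : Matrix (Fin 2) (Fin 2) ℂ :=
  !![⟨q.re, q.imI⟩, ⟨q.imJ, q.imK⟩; ⟨-q.imJ, q.imK⟩, ⟨q.re, -q.imI⟩]

theorem mat_mul (p q : ℍ[ℝ]) : mat (p * q) = mat p * mat q := by
  ext i j
  fin_cases i <;> fin_cases j <;> apply Complex.ext <;>
    simp [mat, Matrix.mul_apply, Fin.sum_univ_two] <;> ring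

theorem mat_mem (q : Qs) : mat q ∈ Matrix.unitaryGroup (Fin 2) ℂ := by
  rw [Matrix.mem_unitaryGroup_iff]
  have h := normSq_one q
  ext i j
  fin_cases i <;> fin_cases j <;> apply Complex.ext <;>
    simp [mat, Matrix.mul_apply, Fin.sum_univ_two, Matrix.star_apply] <;> linarith

theorem mat_det (q : Qs) : (mat q).det = 1 := by
  have h := normSq_one q
  rw [mat, Matrix.det_fin_two_of]
  apply Complex.ext <;> simp <;> linarith

/-- the isomorphism with `SU(2)` -/
noncomputable def lam : Qs →* SU 2 where
  toFun q := ⟨⟨mat q, mat_mem q⟩, mat_det q⟩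
  map_one' := by
    apply Subtype.ext; apply Subtype.ext
    show mat ((1 : Qs) : ℍ[ℝ]) = 1
    ext i j
    fin_cases i <;> fin_cases j <;> apply Complex.ext <;> simp [mat]
  map_mul' p q := by
    apply Subtype.ext; apply Subtype.ext
    exact mat_mul p q

theorem lam_inj : Function.Injective lam := by
  intro p q h
  have h' : mat p = mat q := congrArg (fun x : SU 2 => (x.1.1)) h
  have h0 := congrFun (congrFun h' 0) 0
  have h1 := congrFun (congrFun h' 0) 1
  simp [mat] at h0 h1
  apply Subtype.ext
  ext
  exacts [h0.1, h0.2, h1.1, h1.2]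

theorem lam_surj : Function.Surjective lam := by
  rintro ⟨⟨g, hg⟩, hd⟩
  have hd' : g.det = 1 := hd
  have h1 : star g * g = 1 := Matrix.mem_unitaryGroup_iff'.1 hg
  have h2 : star g = g.adjugate := by
    calc star g = star g * (g * g.adjugate) := by rw [Matrix.mul_adjugate, hd']; simp
      _ = g.adjugate := by rw [← mul_assoc, h1, one_mul]
  rw [Matrix.adjugate_fin_two] at h2
  have e00 : star (g 0 0) = g 1 1 := by simpa [Matrix.star_apply] using congrFun (congrFun h2 0) 0
  have e10 : star (g 0 1) = - g 1 0 := by simpa [Matrix.star_apply] using congrFun (congrFun h2 1) 0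
  have e10' : g 1 0 = - star (g 0 1) := by rw [e10]; ring
  have hq : qt (g 0 0).re (g 0 0).im (g 0 1).re (g 0 1).im ∈ Metric.sphere (0 : ℍ[ℝ]) 1 := by
    apply qt_mem
    rw [Matrix.det_fin_two, ← e00, e10'] at hd'
    have := congrArg Complex.re hd'
    simp at this
    linarith
  refine ⟨⟨_, hq⟩, ?_⟩
  apply Subtype.ext; apply Subtype.ext
  show mat (qt _ _ _ _) = g
  ext i j
  fin_cases i <;> fin_cases j
  · rfl
  · rfl
  · simp only [mat, qt]; simp [e10']; apply Complex.ext <;> simp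
  · simp only [mat, qt]; simp [← e00]; apply Complex.ext <;> simp

/-- A homotopy statement for words. -/
def Good {G : Type*} [Group G] (κ : G →* Qs) (w : Monoid.Coprod G (FreeGroup (Fin 2))) : Prop :=
  ∃ W : Qs → Qs → ℝ → Qs, (Continuous fun p : Qs × Qs × ℝ => W p.1 p.2.1 p.2.2) ∧
    (∀ a b, W a b 0 = FreeGroup.lift ![a, b] (Monoid.Coprod.lift (1 : G →* FreeGroup (Fin 2))
        (MonoidHom.id (FreeGroup (Fin 2))) w)) ∧
    (∀ a b, W a b 1 = Monoid.Coprod.lift κ (FreeGroup.lift ![a, b]) w) ∧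
    (∀ (z₁ z₂ : Subgroup.center Qs) a b t, W (z₁ * a) (z₂ * b) t =
      (FreeGroup.lift ![z₁, z₂] (Monoid.Coprod.lift (1 : G →* FreeGroup (Fin 2))
        (MonoidHom.id (FreeGroup (Fin 2))) w) : Subgroup.center Qs) * W a b t)

theorem good_mul {G : Type*} [Group G] (κ : G →* Qs) (x y : Monoid.Coprod G (FreeGroup (Fin 2)))
    (hx : Good κ x) (hy : Good κ y) : Good κ (x * y) := by
  obtain ⟨X, x1, x2, x3, x4⟩ := hx
  obtain ⟨Y, y1, y2, y3, y4⟩ := hy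
  refine ⟨fun a b t => X a b t * Y a b t, x1.mul y1, ?_, ?_, ?_⟩
  · intro a b; simp only [x2, y2, map_mul]
  · intro a b; simp only [x3, y3, map_mul]
  · intro z₁ z₂ a b t
    simp only [x4, y4, map_mul, Subgroup.coe_mul]
    generalize (FreeGroup.lift ![z₁, z₂]) _ = u
    generalize (FreeGroup.lift ![z₁, z₂]) _ = v
    have := Subgroup.mem_center_iff.1 v.2 (X a b t)
    rw [mul_assoc, ← mul_assoc (X a b t), this]
    simp only [mul_assoc]

theorem good_inl {G : Type*} [Group G] (κ : G →* Qs) (g : G) : Good κ (Monoid.Coprod.inl g) := by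
  have hpc : IsPathConnected (Metric.sphere (0 : ℍ[ℝ]) 1) :=
    isPathConnected_sphere (by rw [Quaternion.rank_eq_four]; norm_num) 0 zero_le_one
  obtain ⟨γ⟩ : Joined (1 : Qs) (κ g) := by
    have := (isPathConnected_iff_pathConnectedSpace.1 hpc)
    exact this.joined _ _
  refine ⟨fun _ _ t => γ.extend t, ?_, ?_, ?_, ?_⟩
  · exact γ.continuous_extend.comp (continuous_snd.comp continuous_snd)
  · intro a b; simp
  · intro a b; simp
  · intro z₁ z₂ a b t; simp

theorem good_inr {G : Type*} [Group G] (κ : G →* Qs) (v : FreeGroup (Fin 2)) :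
    Good κ (Monoid.Coprod.inr v) := by
  refine FreeGroup.induction_on v ?_ (fun i => ?_) (fun i _ => ?_) (fun x y hx hy => ?_)
  · rw [map_one, ← map_one Monoid.Coprod.inl]; exact good_inl κ 1
  · refine ⟨fun a b _ => ![a, b] i, ?_, ?_, ?_, ?_⟩
    · fin_cases i <;> simp <;> fun_prop
    · intro a b; simp
    · intro a b; simp
    · intro z₁ z₂ a b t; fin_cases i <;> simp
  · refine ⟨fun a b _ => (![a, b] i)⁻¹, ?_, ?_, ?_, ?_⟩
    · fin_cases i <;> simp <;> fun_prop
    · intro a b; simp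
    · intro a b; simp
    · intro z₁ z₂ a b t
      have h1 := Subgroup.mem_center_iff.1 (inv_mem z₁.2)
      have h2 := Subgroup.mem_center_iff.1 (inv_mem z₂.2)
      fin_cases i <;> simp [h1, h2]
  · rw [map_mul]; exact good_mul κ _ _ hx hy

theorem good_all {G : Type*} [Group G] (κ : G →* Qs) (w : Monoid.Coprod G (FreeGroup (Fin 2))) :
    Good κ w :=
  Monoid.Coprod.induction_on w (good_inl κ) (good_inr κ) (good_mul κ)

set_option synthInstance.maxHeartbeats 200000 in
theorem exists_W {G : Type*} [Group G] (κ : G →* Qs) (w : Monoid.Coprod G (FreeGroup (Fin 2)))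
    (hw : Monoid.Coprod.lift (1 : G →* FreeGroup (Fin 2))
        (MonoidHom.id (FreeGroup (Fin 2))) w
      = FreeGroup.of 0 * FreeGroup.of 1 * (FreeGroup.of 0)⁻¹ * (FreeGroup.of 1)⁻¹) :
    ∃ W : Qs → Qs → ℝ → Qs, (Continuous fun p : Qs × Qs × ℝ => W p.1 p.2.1 p.2.2) ∧
    (∀ a b, W a b 0 = a * b * a⁻¹ * b⁻¹) ∧
    (∀ a b, W a b 1 = Monoid.Coprod.lift κ (FreeGroup.lift ![a, b]) w) ∧
    (∀ a b t, W (-a) b t = W a b t) ∧ (∀ a b t, W a (-b) t = W a b t) := by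
  obtain ⟨W, h1, h2, h3, h4⟩ := good_all κ w
  have hc : (-1 : Qs) ∈ Subgroup.center Qs := Subgroup.mem_center_iff.2 (fun g => by rw [neg_one_mul_Qs, mul_neg_one_Qs])
  have hz : ∀ z₁ z₂ : Subgroup.center Qs, FreeGroup.lift ![z₁, z₂] (FreeGroup.of 0 *
      FreeGroup.of 1 * (FreeGroup.of 0)⁻¹ * (FreeGroup.of 1)⁻¹) = 1 := by
    intro z₁ z₂
    simp only [map_mul, map_inv, FreeGroup.lift_apply_of]
    show z₁ * z₂ * z₁⁻¹ * z₂⁻¹ = 1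
    have hcomm : z₁ * z₂ = z₂ * z₁ := Subtype.ext (Subgroup.mem_center_iff.1 z₂.2 z₁)
    rw [hcomm, mul_assoc z₂, mul_inv_cancel, mul_one, mul_inv_cancel]
  refine ⟨W, h1, ?_, h3, ?_, ?_⟩
  · intro a b; rw [h2, hw]; simp
  · intro a b t
    have := h4 ⟨-1, hc⟩ 1 a b t
    rw [hw, hz] at this
    rw [← neg_one_mul_Qs]
    simpa only [Subgroup.coe_one, one_mul] using this
  · intro a b t
    have := h4 1 ⟨-1, hc⟩ a b t
    rw [hw, hz] at this
    rw [← neg_one_mul_Qs b]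
    simpa only [Subgroup.coe_one, one_mul] using this

end UnitQuat

/-! ### Part 3: the final argument -/
namespace UnitQuat
open Quaternion

/-- real coordinates -/
def comp (m : Fin 4) (q : ℍ[ℝ]) : ℝ := ![q.re, q.imI, q.imJ, q.imK] m

theorem comp_neg (m : Fin 4) (q : ℍ[ℝ]) : comp m (-q) = - comp m q := by
  fin_cases m <;> simp [comp]

theorem comp_sub (m : Fin 4) (p q : ℍ[ℝ]) : comp m (p - q) = comp m p - comp m q := by
  fin_cases m <;> simp [comp]

theorem norm_sq_comp (q : ℍ[ℝ]) : ‖q‖ ^ 2 = comp 0 q ^ 2 + comp 1 q ^ 2 + comp 2 q ^ 2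
    + comp 3 q ^ 2 := by
  rw [sq, ← Quaternion.normSq_eq_norm_mul_self, Quaternion.normSq_def']
  rfl

theorem abs_comp_le (m : Fin 4) (q : ℍ[ℝ]) : |comp m q| ≤ ‖q‖ := by
  apply abs_le_of_sq_le_sq _ (norm_nonneg q)
  rw [norm_sq_comp]
  fin_cases m <;> simp <;> nlinarith [sq_nonneg (comp 0 q), sq_nonneg (comp 1 q),
    sq_nonneg (comp 2 q), sq_nonneg (comp 3 q)]

theorem exists_comp_ge (q : ℍ[ℝ]) {δ : ℝ} (hδ : 0 < δ) (h : δ ≤ ‖q‖) : ∃ m, δ / 2 ≤ |comp m q| := by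
  by_contra! hc
  have h1 : ∀ m, comp m q ^ 2 < (δ / 2) ^ 2 := fun m => by
    rw [← sq_abs]
    have := hc m
    have := abs_nonneg (comp m q)
    nlinarith
  have := norm_sq_comp q
  have := h1 0
  have := h1 1
  have := h1 2
  have := h1 3
  nlinarith

/-- sign with tie-breaking -/
noncomputable def sg (x : ℝ) (c : ZMod 2) : ZMod 2 := if 0 < x then 1 else if x < 0 then 0 else c

theorem sg_neg {x : ℝ} {c c' : ZMod 2} (h : x ≠ 0 ∨ c' = c + 1) : sg (-x) c' = sg x c + 1 := by
  rcases lt_trichotomy x 0 with hx | hx | hx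
  · simp [sg, hx, hx.le]
  · subst hx
    simp only [sg, neg_zero, lt_irrefl, if_false]
    simpa using h
  · simp only [sg, hx, if_true, neg_pos, Left.neg_neg_iff, not_lt_of_gt hx, if_false]
    rfl

theorem sg_eq {x y : ℝ} {c c' : ZMod 2} {ε : ℝ} (hx : ε ≤ |x|) (hy : |y - x| < ε) :
    sg y c' = sg x c := by
  rw [abs_lt] at hy
  rcases le_abs.1 hx with h | h
  · have h1 : 0 < x := by linarith
    have h2 : 0 < y := by linarith
    simp [sg, h1, h2]
  · have h1 : x < 0 := by linarith
    have h2 : y < 0 := by linarith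
    simp [sg, h1, h2, not_lt_of_gt h1, not_lt_of_gt h2]

/-- imaginary unit quaternions -/
abbrev Im := {a : Qs // (a : ℍ[ℝ]).re = 0}

/-- antipode -/
noncomputable def anti (a : Im) : Im := ⟨-a.1, by
  show (-((a.1 : Qs) : ℍ[ℝ])).re = 0
  rw [Quaternion.re_neg, a.2, neg_zero]⟩

/-- odd tie-breaking function -/
noncomputable def tie (a : Im) : ZMod 2 :=
  sg (a.1 : ℍ[ℝ]).imI (sg (a.1 : ℍ[ℝ]).imJ (sg (a.1 : ℍ[ℝ]).imK 0))

theorem tie_anti (a : Im) : tie (anti a) = tie a + 1 := by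
  have h := normSq_one a.1
  rw [a.2] at h
  have e1 : ((anti a).1 : ℍ[ℝ]).imI = - (a.1 : ℍ[ℝ]).imI := Quaternion.imI_neg _
  have e2 : ((anti a).1 : ℍ[ℝ]).imJ = - (a.1 : ℍ[ℝ]).imJ := Quaternion.imJ_neg _
  have e3 : ((anti a).1 : ℍ[ℝ]).imK = - (a.1 : ℍ[ℝ]).imK := Quaternion.imK_neg _
  simp only [tie, e1, e2, e3]
  apply sg_neg
  by_cases h1 : (a.1 : ℍ[ℝ]).imI = 0
  · right
    apply sg_neg
    by_cases h2 : (a.1 : ℍ[ℝ]).imJ = 0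
    · right
      apply sg_neg
      left
      intro h3
      rw [h1, h2, h3] at h
      norm_num at h
    · exact Or.inl h2
  · exact Or.inl h1

/-- spherical coordinates -/
noncomputable def sph (φ ψ : ℝ) : Im :=
  ⟨⟨qt 0 (Real.cos ψ * Real.cos φ) (Real.cos ψ * Real.sin φ) (Real.sin ψ), qt_mem (by
    have h1 := Real.sin_sq_add_cos_sq φ
    have h2 := Real.sin_sq_add_cos_sq ψ
    linear_combination Real.cos ψ ^ 2 * h1 + h2)⟩, rfl⟩

theorem sph_ext {φ ψ φ' ψ' : ℝ} (h1 : Real.cos ψ * Real.cos φ = Real.cos ψ' * Real.cos φ')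
    (h2 : Real.cos ψ * Real.sin φ = Real.cos ψ' * Real.sin φ') (h3 : Real.sin ψ = Real.sin ψ') :
    sph φ ψ = sph φ' ψ' := by
  apply Subtype.ext; apply Subtype.ext
  simp only [sph, h1, h2, h3]

theorem qt_re (x y z w : ℝ) : (qt x y z w).re = x := rfl
theorem qt_imI (x y z w : ℝ) : (qt x y z w).imI = y := rfl
theorem qt_imJ (x y z w : ℝ) : (qt x y z w).imJ = z := rfl
theorem qt_imK (x y z w : ℝ) : (qt x y z w).imK = w := rfl

theorem sph_anti {φ ψ φ' ψ' : ℝ} (h1 : Real.cos ψ * Real.cos φ = -(Real.cos ψ' * Real.cos φ'))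
    (h2 : Real.cos ψ * Real.sin φ = -(Real.cos ψ' * Real.sin φ'))
    (h3 : Real.sin ψ = -Real.sin ψ') :
    sph φ ψ = anti (sph φ' ψ') := by
  apply Subtype.ext; apply Subtype.ext
  show qt _ _ _ _ = - qt _ _ _ _
  rw [h1, h2, h3]
  ext <;> simp [qt_re, qt_imI, qt_imJ, qt_imK]

theorem continuous_qt : Continuous fun p : ℝ × ℝ × ℝ × ℝ => qt p.1 p.2.1 p.2.2.1 p.2.2.2 := by
  have e : (fun p : ℝ × ℝ × ℝ × ℝ => qt p.1 p.2.1 p.2.2.1 p.2.2.2) = fun p =>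
      p.1 • qt 1 0 0 0 + p.2.1 • qt 0 1 0 0 + p.2.2.1 • qt 0 0 1 0 + p.2.2.2 • qt 0 0 0 1 := by
    funext p
    ext <;> simp [qt_re, qt_imI, qt_imJ, qt_imK]
  rw [e]
  fun_prop

theorem continuous_sph : Continuous fun p : ℝ × ℝ => (sph p.1 p.2).1 := by
  apply Continuous.subtype_mk
  exact continuous_qt.comp (f := fun p : ℝ × ℝ => ((0 : ℝ), Real.cos p.2 * Real.cos p.1,
    Real.cos p.2 * Real.sin p.1, Real.sin p.2)) (by fun_prop)

/-- The homotopy. -/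
noncomputable def F (W : Qs → Qs → ℝ → Qs) (a b : Qs) (t : ℝ) : ℍ[ℝ] :=
  ((1 - max 0 (t - 1)) • (W a b (min t 1) : ℍ[ℝ]) - (max 0 (t - 1)) • (1 : ℍ[ℝ])) *
    ((b : ℍ[ℝ]) * (a : ℍ[ℝ]))

theorem norm_Qs (a : Qs) : ‖(a : ℍ[ℝ])‖ = 1 := by simp

theorem F_ne (W : Qs → Qs → ℝ → Qs) (hW : ∀ a b, W a b 1 ≠ 1) (a b : Qs) (t : ℝ) (ht : t ≤ 2) :
    F W a b t ≠ 0 := by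
  have ha : (a : ℍ[ℝ]) ≠ 0 := fun h => by have := norm_Qs a; rw [h] at this; simp at this
  have hb : (b : ℍ[ℝ]) ≠ 0 := fun h => by have := norm_Qs b; rw [h] at this; simp at this
  refine mul_ne_zero ?_ (mul_ne_zero hb ha)
  intro h
  rw [sub_eq_zero] at h
  have hn := congrArg norm h
  have hle : 0 ≤ 1 - max 0 (t - 1) := by
    have : max 0 (t - 1) ≤ 1 := max_le zero_le_one (by linarith)
    linarith
  rw [norm_smul, norm_smul, norm_Qs, norm_one, mul_one, mul_one, Real.norm_eq_abs,
    Real.norm_eq_abs, abs_of_nonneg hle, abs_of_nonneg (le_max_left _ _)] at hn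
  · have hr : max 0 (t - 1) = 1 / 2 := by linarith
    have ht1 : 1 ≤ t := by
      by_contra hlt
      rw [max_eq_left (by linarith)] at hr
      norm_num at hr
    rw [hr, min_eq_right ht1, show (1 : ℝ) - 1 / 2 = 1 / 2 by norm_num] at h
    exact hW a b (Subtype.ext (smul_right_injective _ (by norm_num : (1 / 2 : ℝ) ≠ 0) h))

theorem F_cont (W : Qs → Qs → ℝ → Qs) (hW : Continuous fun p : Qs × Qs × ℝ => W p.1 p.2.1 p.2.2) :
    Continuous fun p : Qs × Qs × ℝ => F W p.1 p.2.1 p.2.2 := by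
  have h1 : Continuous fun p : Qs × Qs × ℝ => (W p.1 p.2.1 (min p.2.2 1) : ℍ[ℝ]) :=
    continuous_subtype_val.comp (hW.comp (f := fun p : Qs × Qs × ℝ => (p.1, p.2.1, min p.2.2 1))
      (by fun_prop))
  unfold F
  fun_prop

theorem F_zero (W : Qs → Qs → ℝ → Qs) (hW : ∀ a b, W a b 0 = a * b * a⁻¹ * b⁻¹) (a b : Qs) :
    F W a b 0 = (a : ℍ[ℝ]) * b := by
  have e : W a b 0 * (b * a) = a * b := by rw [hW]; group
  have e' := congrArg (fun x : Qs => (x : ℍ[ℝ])) e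
  simp only [Metric.unitSphere.coe_mul] at e'
  simp only [F]
  norm_num
  exact e'

theorem F_two (W : Qs → Qs → ℝ → Qs) (a b : Qs) : F W a b 2 = - ((b : ℍ[ℝ]) * a) := by
  simp only [F]
  norm_num

theorem F_negA (W : Qs → Qs → ℝ → Qs) (hW : ∀ a b t, W (-a) b t = W a b t) (a b : Qs) (t : ℝ) :
    F W (-a) b t = - F W a b t := by
  have : ((-a : Qs) : ℍ[ℝ]) = - (a : ℍ[ℝ]) := rfl
  simp only [F, hW, this, mul_neg]

theorem F_negB (W : Qs → Qs → ℝ → Qs) (hW : ∀ a b t, W a (-b) t = W a b t) (a b : Qs) (t : ℝ) :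
    F W a (-b) t = - F W a b t := by
  have : ((-b : Qs) : ℍ[ℝ]) = - (b : ℍ[ℝ]) := rfl
  simp only [F, hW, this, mul_neg, neg_mul]

theorem comp_swap (a b : Im) (m : Fin 4) : comp m (-((b.1 : ℍ[ℝ]) * (a.1 : ℍ[ℝ]))) =
    if m = 0 then - comp m ((a.1 : ℍ[ℝ]) * (b.1 : ℍ[ℝ])) else
      comp m ((a.1 : ℍ[ℝ]) * (b.1 : ℍ[ℝ])) := by
  have ha := a.2
  have hb := b.2
  fin_cases m <;> simp [comp, ha, hb] <;> ring

theorem exists_one (W : Qs → Qs → ℝ → Qs)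
    (hc : Continuous fun p : Qs × Qs × ℝ => W p.1 p.2.1 p.2.2)
    (h0 : ∀ a b, W a b 0 = a * b * a⁻¹ * b⁻¹)
    (hA : ∀ a b t, W (-a) b t = W a b t) (hB : ∀ a b t, W a (-b) t = W a b t) :
    ∃ a b, W a b 1 = 1 := by
  by_contra! hne
  -- the map in coordinates
  set G : ℝ × ℝ × ℝ × ℝ → ℍ[ℝ] := fun p => F W (sph p.1 p.2.1).1 (sph p.2.2.1 0).1 p.2.2.2 with hG
  have hGc : Continuous G := by
    have h1 : Continuous fun p : ℝ × ℝ × ℝ × ℝ => (sph p.1 p.2.1).1 :=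
      continuous_sph.comp (f := fun p : ℝ × ℝ × ℝ × ℝ => (p.1, p.2.1)) (by fun_prop)
    have h2 : Continuous fun p : ℝ × ℝ × ℝ × ℝ => (sph p.2.2.1 0).1 :=
      continuous_sph.comp (f := fun p : ℝ × ℝ × ℝ × ℝ => (p.2.2.1, (0 : ℝ))) (by fun_prop)
    exact (F_cont W hc).comp (f := fun p : ℝ × ℝ × ℝ × ℝ =>
      ((sph p.1 p.2.1).1, (sph p.2.2.1 0).1, p.2.2.2)) (by fun_prop)
  set K : Set (ℝ × ℝ × ℝ × ℝ) := Set.Icc (0, 0, 0, 0)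
    (2 * Real.pi, Real.pi / 2, Real.pi, 2) with hK
  have hKc : IsCompact K := isCompact_Icc
  have hpi := Real.pi_pos
  have hKne : K.Nonempty := ⟨(0, 0, 0, 0), by
    simp only [hK, Set.mem_Icc, Prod.mk_le_mk]
    refine ⟨⟨le_refl _, le_refl _, le_refl _, le_refl _⟩, ?_, ?_, ?_, ?_⟩ <;> positivity⟩
  obtain ⟨x0, hx0, hmin⟩ := hKc.exists_isMinOn hKne hGc.norm.continuousOn
  set δ := ‖G x0‖ with hδ
  have hδ0 : 0 < δ := norm_pos_iff.2 (F_ne W hne _ _ _ (by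
    have := hx0.2.2.2.2
    exact this))
  have huc := hKc.uniformContinuousOn_of_continuous hGc.continuousOn
  rw [Metric.uniformContinuousOn_iff] at huc
  obtain ⟨η, hη, huc⟩ := huc (δ / 2) (by linarith)
  obtain ⟨N, hN⟩ := exists_nat_gt (Real.pi / η)
  have hN0 : 0 < (N : ℝ) := lt_trans (by positivity) hN
  have hNn : N ≠ 0 := by rintro rfl; simp at hN0
  have hstep : Real.pi / N < η := by
    rw [div_lt_iff₀ hN0]; rw [div_lt_iff₀ hη] at hN; linarith
  -- the grid
  set A : ℕ → ℕ → Im := fun i j => sph (Real.pi / N * i) (Real.pi / 2 / N * j) with hAdef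
  set B : ℕ → Im := fun k => sph (Real.pi / N * k) 0 with hBdef
  set s : Fin 4 → (Im × Im) × ℕ → ZMod 2 := fun m v =>
    sg (comp m (F W v.1.1.1 v.1.2.1 (2 / N * v.2)))
      (tie v.1.1 + tie v.1.2 + if m = 0 ∧ v.2 = N then 1 else 0) with hs
  have cN : Real.pi / N * (N : ℝ) = Real.pi := by field_simp
  have cN2 : Real.pi / 2 / N * (N : ℝ) = Real.pi / 2 := by field_simp
  have c2 : 2 / N * (N : ℝ) = 2 := by field_simp
  obtain ⟨i, hi, j, hj, k, hk, t, ht, L, hL, hdiff⟩ := CochainZ2.exists_cell anti anti A B N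
    (by
      intro i
      simp only [hAdef]
      push_cast
      rw [mul_add, cN]
      apply sph_anti <;> simp)
    (by
      intro j
      simp only [hAdef]
      push_cast
      rw [mul_add, cN, ← two_mul]
      apply sph_ext <;> simp)
    (by
      intro i
      simp only [hAdef]
      rw [cN2]
      apply sph_ext <;> simp)
    (by
      simp only [hBdef]
      rw [cN]
      apply sph_anti <;> simp)
    s
    (by
      intro m a b t
      simp only [hs]
      have : F W (anti a).1 b.1 (2 / N * t) = - F W a.1 b.1 (2 / N * t) := F_negA W hA _ _ _
      rw [this, comp_neg]
      apply sg_neg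
      right
      rw [tie_anti]; ring)
    (by
      intro m a b t
      simp only [hs]
      have : F W a.1 (anti b).1 (2 / N * t) = - F W a.1 b.1 (2 / N * t) := F_negB W hB _ _ _
      rw [this, comp_neg]
      apply sg_neg
      right
      rw [tie_anti]; ring)
    (by
      intro m a b
      simp only [hs]
      rw [c2, F_two, comp_swap, Nat.cast_zero, mul_zero, F_zero W h0]
      by_cases hm : m = 0
      · simp only [hm, if_true, true_and, hNn.symm, if_false]
        apply sg_neg
        right; ring
      · simp only [hm, if_false, false_and, add_zero])
  -- the cell
  have hN1 : (0 : ℝ) < Real.pi / N := by positivity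
  have h2pi : 2 / (N : ℝ) ≤ Real.pi / N :=
    div_le_div_of_nonneg_right (by linarith [Real.pi_gt_three]) hN0.le
  have hpih : Real.pi / 2 / (N : ℝ) ≤ Real.pi / N :=
    div_le_div_of_nonneg_right (by linarith) hN0.le
  have hmemK : ∀ i' j' k' t' : ℕ, i' ≤ N + N → j' ≤ N → k' ≤ N → t' ≤ N →
      ((Real.pi / N * i', Real.pi / 2 / N * j', Real.pi / N * k', 2 / N * t') :
        ℝ × ℝ × ℝ × ℝ) ∈ K := by
    intro i' j' k' t' hi' hj' hk' ht'
    have hi2 : (i' : ℝ) ≤ N + N := by exact_mod_cast hi'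
    have hj2 : (j' : ℝ) ≤ N := by exact_mod_cast hj'
    have hk2 : (k' : ℝ) ≤ N := by exact_mod_cast hk'
    have ht2 : (t' : ℝ) ≤ N := by exact_mod_cast ht'
    simp only [hK, Set.mem_Icc, Prod.mk_le_mk]
    refine ⟨⟨by positivity, by positivity, by positivity, by positivity⟩, ?_, ?_, ?_, ?_⟩
    · calc Real.pi / N * (i' : ℝ) ≤ Real.pi / N * (N + N) := by gcongr
        _ = 2 * Real.pi := by rw [mul_add, cN]; ring
    · calc Real.pi / 2 / N * (j' : ℝ) ≤ Real.pi / 2 / N * N := by gcongr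
        _ = Real.pi / 2 := cN2
    · calc Real.pi / N * (k' : ℝ) ≤ Real.pi / N * N := by gcongr
        _ = Real.pi := cN
    · calc 2 / N * (t' : ℝ) ≤ 2 / N * N := by gcongr
        _ = 2 := c2
  have hd : ∀ (c : ℝ) (n n' : ℕ), 0 ≤ c → c ≤ Real.pi / N → (n' = n ∨ n' = n + 1) →
      dist (c * (n' : ℝ)) (c * (n : ℝ)) ≤ Real.pi / N := by
    intro c n n' hc0 hc1 h
    rcases h with rfl | rfl
    · rw [dist_self]; exact hN1.le
    · rw [Real.dist_eq]
      push_cast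
      rw [show c * ((n : ℝ) + 1) - c * n = c by ring, abs_of_nonneg hc0]
      exact hc1
  have hform : ∀ v ∈ L, ∃ p ∈ K, F W v.1.1.1 v.1.2.1 (2 / N * v.2) = G p ∧
      dist p (Real.pi / N * i, Real.pi / 2 / N * j, Real.pi / N * k, 2 / N * t) ≤ Real.pi / N := by
    intro v hv
    obtain ⟨i', j', k', t', hi', hj', hk', ht', rfl⟩ := hL v hv
    refine ⟨(Real.pi / N * i', Real.pi / 2 / N * j', Real.pi / N * k', 2 / N * t'),
      hmemK i' j' k' t' (by omega) (by omega) (by omega) (by omega), rfl, ?_⟩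
    simp only [Prod.dist_eq, max_le_iff]
    exact ⟨hd _ _ _ hN1.le le_rfl hi', hd _ _ _ (by positivity) hpih hj',
      hd _ _ _ hN1.le le_rfl hk', hd _ _ _ (by positivity) h2pi ht'⟩
  have hp0 := hmemK i j k t hi.le hj.le hk.le ht.le
  set p0 : ℝ × ℝ × ℝ × ℝ :=
    (Real.pi / N * i, Real.pi / 2 / N * j, Real.pi / N * k, 2 / N * t) with hp0def
  obtain ⟨m, hm⟩ := exists_comp_ge (G p0) hδ0 (hmin hp0)
  have hall : ∀ v ∈ L, s m v = sg (comp m (G p0)) 0 := by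
    intro v hv
    obtain ⟨p, hp, hpe, hpd⟩ := hform v hv
    simp only [hs]
    rw [hpe]
    apply sg_eq hm
    rw [← comp_sub]
    refine lt_of_le_of_lt (abs_comp_le _ _) ?_
    rw [← dist_eq_norm]
    exact huc p hp p0 hp0 (lt_of_le_of_lt hpd hstep)
  obtain ⟨v, hv, v', hv', hvv⟩ := hdiff m
  exact hvv ((hall v hv).trans (hall v' hv').symm)

end UnitQuat

/-- If `w ∈ SU(2) ∗ F₂` has content the commutator `[x₁,x₂]` of the two generators of
`F₂`, then the equation `w(a,b) = 1` can be solved in `SU(2)`. -/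
theorem equation_solvable_in_SU2_of_content_eq_commutator
    (w : Monoid.Coprod (SU 2) (FreeGroup (Fin 2)))
    (hw : Monoid.Coprod.lift (1 : SU 2 →* FreeGroup (Fin 2))
        (MonoidHom.id (FreeGroup (Fin 2))) w
      = FreeGroup.of 0 * FreeGroup.of 1 * (FreeGroup.of 0)⁻¹ * (FreeGroup.of 1)⁻¹) :
    ∃ a b : SU 2,
      Monoid.Coprod.lift (MonoidHom.id (SU 2)) (FreeGroup.lift ![a, b]) w = 1 := by
  let e := MulEquiv.ofBijective UnitQuat.lam ⟨UnitQuat.lam_inj, UnitQuat.lam_surj⟩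
  obtain ⟨W, hc, h0, h1, hA, hB⟩ := UnitQuat.exists_W e.symm.toMonoidHom w hw
  obtain ⟨a, b, hab⟩ := UnitQuat.exists_one W hc h0 hA hB
  refine ⟨UnitQuat.lam a, UnitQuat.lam b, ?_⟩
  have key : Monoid.Coprod.lift (MonoidHom.id (SU 2))
      (FreeGroup.lift ![UnitQuat.lam a, UnitQuat.lam b]) =
      UnitQuat.lam.comp (Monoid.Coprod.lift e.symm.toMonoidHom (FreeGroup.lift ![a, b])) := by
    apply Monoid.Coprod.hom_ext
    · ext1 g
      simp only [MonoidHom.comp_apply, Monoid.Coprod.lift_apply_inl, MonoidHom.id_apply]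
      exact (e.apply_symm_apply g).symm
    · apply FreeGroup.ext_hom
      intro i
      simp only [MonoidHom.comp_apply, Monoid.Coprod.lift_apply_inr, FreeGroup.lift_apply_of]
      fin_cases i <;> rfl
  rw [key, MonoidHom.comp_apply, ← h1, hab, map_one]
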